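/- Let Γ be an infinite additive abelian group which is not a torsion group (Γ contains an element of infinite additive order). Let T be a finite tree of diameter 5 with central vertices v_{c1} and v_{c2} (the two adjacent vertices each satisfying dist(v_{ci}, u) ≤ 3 for every vertex u), and suppose both v_{c1} and v_{c2} are support vertices. Then T is Γ-vertex magic if and only if T has no vertex of degree 2. -/

import Mathlib

/-!
In a magic labeling with constant `μ` every support vertex is labeled `μ`, since it is the only
neighbor of one of its pendant vertices. A vertex of degree `2` next to a support vertex would
therefore force the label `0` on its other neighbor.

Conversely, suppose that every vertex is pendant or a support vertex, and label all support
vertices `μ`. A non-pendant vertex of degree `d` with `m` neighbors that are not support vertices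
(hence pendant) is balanced when these `m ≥ 1` labels sum to `(m + 1 - d) • μ`. This can be
achieved with nonzero labels unless `m = 1` and `(d - 2) • μ = 0`, so it suffices to choose `μ`
not annihilated by any of the finitely many nonzero integers `d - 2`.

In the tree, a vertex without neighbors farther from a center `c` is pendant, in particular every
vertex at distance `3` from `c`. A vertex at distance at least `2` from `c` is thus pendant or has
a pendant neighbor, and every vertex other than the two centers is that far from one of them.
-/

section NonzeroSums

variable {ι Γ : Type*} [AddCommGroup Γ]

lemma exists_forall_ne_zero_sum_eq_of_sum_erase_eq [DecidableEq ι] {s : Finset ι} {a : ι}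
    (ha : a ∈ s) {u c : Γ} (hu : u ≠ 0)
    (h : ∃ f : ι → Γ, (∀ i, f i ≠ 0) ∧ ∑ i ∈ s.erase a, f i = c - u) :
    ∃ f : ι → Γ, (∀ i, f i ≠ 0) ∧ ∑ i ∈ s, f i = c := by
  obtain ⟨f, hf, hsum⟩ := h
  refine ⟨Function.update f a u, fun i => ?_, ?_⟩
  · rcases eq_or_ne i a with rfl | hi
    · simpa using hu
    · simpa [hi] using hf i
  · rw [← Finset.add_sum_erase _ _ ha, Function.update_self,
      Finset.sum_update_of_notMem (Finset.notMem_erase a s), hsum, add_sub_cancel]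

lemma exists_forall_ne_zero_sum_eq_of_ne_zero (hΓ : 3 ≤ ENat.card Γ) {s : Finset ι}
    (hs : s.Nonempty) {c : Γ} (hc : c ≠ 0) :
    ∃ f : ι → Γ, (∀ i, f i ≠ 0) ∧ ∑ i ∈ s, f i = c := by
  classical
  induction hs using Finset.Nonempty.cons_induction generalizing c with
  | singleton a => exact ⟨fun _ => c, fun _ => hc, Finset.sum_singleton _ _⟩
  | cons a s ha _ ih =>
    obtain ⟨u, hu, huc⟩ := ENat.exists_ne_ne_of_three_le hΓ 0 c
    refine exists_forall_ne_zero_sum_eq_of_sum_erase_eq (Finset.mem_cons_self a s) hu ?_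
    rw [Finset.erase_cons]
    exact ih (sub_ne_zero.2 huc.symm)

lemma exists_forall_ne_zero_sum_eq_of_nontrivial (hΓ : 3 ≤ ENat.card Γ) {s : Finset ι}
    (hs : s.Nontrivial) (c : Γ) :
    ∃ f : ι → Γ, (∀ i, f i ≠ 0) ∧ ∑ i ∈ s, f i = c := by
  classical
  obtain ⟨a, ha⟩ := hs.nonempty
  obtain ⟨u, hu, huc⟩ := ENat.exists_ne_ne_of_three_le hΓ 0 c
  exact exists_forall_ne_zero_sum_eq_of_sum_erase_eq ha hu
    (exists_forall_ne_zero_sum_eq_of_ne_zero hΓ hs.erase_nonempty (sub_ne_zero.2 huc.symm))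

end NonzeroSums

section Exponent

variable {Γ : Type*} [AddGroup Γ]

lemma three_le_enatCard_of_exponent_eq_zero (hΓ : AddMonoid.exponent Γ = 0) :
    3 ≤ ENat.card Γ := by
  have : Infinite Γ := not_finite_iff_infinite.1 fun _ => AddMonoid.exponent_ne_zero_of_finite hΓ
  simp

lemma exists_forall_zsmul_ne_zero_of_exponent_eq_zero (hΓ : AddMonoid.exponent Γ = 0)
    {ι : Type*} [Finite ι] {n : ι → ℤ} (hn : ∀ i, n i ≠ 0) : ∃ g : Γ, ∀ i, n i • g ≠ 0 := by
  cases nonempty_fintype ι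
  have hprod : ∏ i, n i ≠ 0 := Finset.prod_ne_zero_iff.2 fun i _ => hn i
  obtain ⟨g, hg⟩ :=
    AddMonoid.exponent_eq_zero_iff_forall.1 hΓ (∏ i, n i).natAbs (Int.natAbs_pos.2 hprod)
  refine ⟨g, fun i hi => hg ?_⟩
  rw [natAbs_nsmul_eq_zero]
  obtain ⟨m, hm⟩ := Finset.dvd_prod_of_mem n (Finset.mem_univ i)
  rw [hm, mul_zsmul', hi, zsmul_zero]

end Exponent

section SupportVertices

variable {V : Type*} {G : SimpleGraph V} [G.LocallyFinite]

variable (G) in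
/-- A support vertex of a graph: a vertex adjacent to a pendant vertex. Pendant vertices are
written out as vertices of degree `1`. -/
def IsSupport (v : V) : Prop := ∃ u, G.Adj v u ∧ G.degree u = 1

lemma eq_of_degree_eq_one_of_adj_of_adj {p a b : V} (hp : G.degree p = 1) (ha : G.Adj p a)
    (hb : G.Adj p b) : a = b :=
  (SimpleGraph.degree_eq_one_iff_existsUnique_adj.1 hp).unique ha hb

lemma not_isSupport_of_adj_of_degree_eq_one {p v : V} (hpv : G.Adj p v) (hp : G.degree p = 1)
    (hv : G.degree v ≠ 1) : ¬ IsSupport G p := by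
  rintro ⟨u, hpu, hu⟩
  exact hv (eq_of_degree_eq_one_of_adj_of_adj hp hpv hpu ▸ hu)

lemma eq_or_adj_of_forall_adj_degree_eq_one (hG : G.Preconnected) {x : V}
    (hx : ∀ y, G.Adj x y → G.degree y = 1) (z : V) : z = x ∨ G.Adj x z := by
  obtain ⟨w⟩ := hG z x
  induction w with
  | nil => exact .inl rfl
  | cons hzy _ ih =>
    rcases ih hx with rfl | hxy
    · exact .inr hzy.symm
    · exact .inl (eq_of_degree_eq_one_of_adj_of_adj (hx _ hxy) hzy.symm hxy.symm)

lemma exists_adj_isSupport (hG : G.Preconnected) (hps : ∀ v, G.degree v = 1 ∨ IsSupport G v)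
    {a b : V} (hab : G.Adj a b) (ha : IsSupport G a) (hb : IsSupport G b) (x : V) :
    ∃ y, G.Adj x y ∧ IsSupport G y := by
  by_contra! hx
  have hstar := eq_or_adj_of_forall_adj_degree_eq_one hG
    fun y hxy => (hps y).resolve_right (hx y hxy)
  have hax : a = x := (hstar a).resolve_right fun h => hx a h ha
  have hbx : b = x := (hstar b).resolve_right fun h => hx b h hb
  exact hab.ne (hax.trans hbx.symm)

end SupportVertices

section Tree

variable {V : Type*} {T : SimpleGraph V} [T.LocallyFinite]

lemma degree_eq_one_of_forall_adj_dist_le (hT : T.IsTree) {r x : V} (hx : x ≠ r)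
    (h : ∀ y, T.Adj x y → T.dist r y ≤ T.dist r x) : T.degree x = 1 := by
  obtain ⟨p, -, hunique⟩ := hT.existsUnique_path r x
  have hp : ¬ p.Nil := SimpleGraph.Walk.not_nil_of_ne hx.symm
  refine SimpleGraph.degree_eq_one_iff_existsUnique_adj.2
    ⟨p.penultimate, (p.adj_penultimate hp).symm, fun y hxy => ?_⟩
  have hdist : T.dist r x = T.dist r y + 1 := by
    have := hT.dist_eq_dist_add_one_of_adj r hxy
    have := h y hxy
    omega
  obtain ⟨q, hq⟩ := hT.connected.exists_walk_length_eq_dist r y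
  have hpath : (q.concat hxy.symm).IsPath :=
    SimpleGraph.Walk.isPath_of_length_eq_dist _ (by simp [hq, hdist])
  rw [← hunique _ hpath, SimpleGraph.Walk.penultimate_concat]

lemma degree_eq_one_or_isSupport_of_forall_dist_le (hT : T.IsTree) {r x : V} (hx : x ≠ r)
    (h : ∀ u, T.dist r u ≤ T.dist r x + 1) : T.degree x = 1 ∨ IsSupport T x := by
  by_cases hfar : ∃ y, T.Adj x y ∧ T.dist r x < T.dist r y
  · obtain ⟨y, hxy, hlt⟩ := hfar
    have hy : y ≠ r := by
      rintro rfl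
      simp at hlt
    exact .inr ⟨y, hxy, degree_eq_one_of_forall_adj_dist_le hT hy
      fun u _ => (h u).trans hlt⟩
  · push Not at hfar
    exact .inl (degree_eq_one_of_forall_adj_dist_le hT hx hfar)

lemma degree_eq_one_or_isSupport_of_dist_le_three (hT : T.IsTree) {c₁ c₂ : V}
    (hadj : T.Adj c₁ c₂) (hc₁ : ∀ u, T.dist c₁ u ≤ 3) (hc₂ : ∀ u, T.dist c₂ u ≤ 3)
    (hs₁ : IsSupport T c₁) (hs₂ : IsSupport T c₂) (x : V) :
    T.degree x = 1 ∨ IsSupport T x := by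
  rcases eq_or_ne x c₁ with rfl | hx₁
  · exact .inr hs₁
  rcases eq_or_ne x c₂ with rfl | hx₂
  · exact .inr hs₂
  have hdist : 2 ≤ T.dist c₁ x ∨ 2 ≤ T.dist c₂ x := by
    have hpos₁ := hT.connected.pos_dist_of_ne hx₁.symm
    have hpos₂ := hT.connected.pos_dist_of_ne hx₂.symm
    have hne := hT.dist_ne_of_adj x hadj
    rw [T.dist_comm, T.dist_comm (u := x)] at hne
    omega
  rcases hdist with h | h
  · exact degree_eq_one_or_isSupport_of_forall_dist_le hT hx₁ fun u => (hc₁ u).trans (by omega)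
  · exact degree_eq_one_or_isSupport_of_forall_dist_le hT hx₂ fun u => (hc₂ u).trans (by omega)

end Tree

section VertexMagic

variable {V Γ : Type*} [AddCommGroup Γ] {G : SimpleGraph V} [G.LocallyFinite]

variable (Γ G) in
/-- A graph is `Γ`-vertex magic if it has a labeling of its vertices by nonzero elements of `Γ`
whose sum over each open neighborhood is the same. -/
def IsVertexMagic : Prop :=
  ∃ (ℓ : V → Γ) (μ : Γ), (∀ w, ℓ w ≠ 0) ∧ ∀ w, ∑ x ∈ G.neighborFinset w, ℓ x = μ

lemma IsSupport.label_eq {ℓ : V → Γ} {μ : Γ}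
    (hℓ : ∀ w, ∑ x ∈ G.neighborFinset w, ℓ x = μ) {v : V} (hv : IsSupport G v) : ℓ v = μ := by
  obtain ⟨p, hvp, hp⟩ := hv
  obtain ⟨a, ha⟩ := Finset.card_eq_one.1 hp
  have hva : v = a := by simpa [ha] using (G.mem_neighborFinset p v).2 hvp.symm
  simpa [ha, ← hva] using hℓ p

lemma IsVertexMagic.degree_ne_two_of_adj_isSupport (hG : IsVertexMagic Γ G) {v w : V}
    (hvw : G.Adj v w) (hw : IsSupport G w) : G.degree v ≠ 2 := by
  classical
  obtain ⟨ℓ, μ, hne, hℓ⟩ := hG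
  intro hv
  have hmem := (G.mem_neighborFinset v w).2 hvw
  obtain ⟨u, hu⟩ : ∃ u, (G.neighborFinset v).erase w = {u} := by
    rw [← Finset.card_eq_one, Finset.card_erase_of_mem hmem, G.card_neighborFinset_eq_degree, hv]
  have hsum : ℓ w + ℓ u = μ := by
    rw [← hℓ v, ← Finset.add_sum_erase _ _ hmem, hu, Finset.sum_singleton]
  exact hne u (by simpa [hw.label_eq hℓ] using hsum)

open Classical in
lemma exists_forall_ne_zero_sum_neighborFinset_eq (hΓ : 3 ≤ ENat.card Γ) {μ : Γ} {v : V}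
    (hps : G.degree v = 1 ∨ IsSupport G v) (hμ : ((G.degree v : ℤ) - 2) • μ ≠ 0) :
    ∃ f : V → Γ, (∀ x, f x ≠ 0) ∧
      ∑ x ∈ G.neighborFinset v, (if IsSupport G x then μ else f x) = μ := by
  by_cases hv : G.degree v = 1
  · have hμ0 : μ ≠ 0 := by
      rintro rfl
      simp at hμ
    have hsupp : ∀ x ∈ G.neighborFinset v, IsSupport G x :=
      fun x hx => ⟨v, ((G.mem_neighborFinset v x).1 hx).symm, hv⟩
    refine ⟨fun _ => μ, fun _ => hμ0, ?_⟩
    rw [Finset.sum_congr rfl fun x hx => if_pos (hsupp x hx), Finset.sum_const,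
      G.card_neighborFinset_eq_degree, hv, one_smul]
  set S := {x ∈ G.neighborFinset v | IsSupport G x}
  set L := {x ∈ G.neighborFinset v | ¬ IsSupport G x}
  have hL : L.Nonempty := by
    obtain ⟨p, hvp, hp⟩ := hps.resolve_left hv
    exact ⟨p, by simp [L, hvp, not_isSupport_of_adj_of_degree_eq_one hvp.symm hp hv]⟩
  have hcard : S.card + L.card = G.degree v := by
    rw [Finset.card_filter_add_card_filter_not, G.card_neighborFinset_eq_degree]
  obtain ⟨f, hf, hfs⟩ : ∃ f : V → Γ, (∀ x, f x ≠ 0) ∧ ∑ x ∈ L, f x = μ - S.card • μ := by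
    rcases hL.exists_eq_singleton_or_nontrivial with ⟨p, hsing⟩ | hnontriv
    · refine exists_forall_ne_zero_sum_eq_of_ne_zero hΓ hL fun h => hμ ?_
      have hdeg : (G.degree v : ℤ) - 2 = S.card - 1 := by
        rw [hsing, Finset.card_singleton] at hcard
        omega
      rw [hdeg, sub_smul, one_smul, natCast_zsmul, ← neg_sub, h, neg_zero]
    · exact exists_forall_ne_zero_sum_eq_of_nontrivial hΓ hnontriv _
  refine ⟨f, hf, ?_⟩
  rw [Finset.sum_ite, Finset.sum_const, hfs, add_sub_cancel]

lemma isVertexMagic_of_forall_degree_sub_two_zsmul_ne_zero (hΓ : 3 ≤ ENat.card Γ)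
    (hps : ∀ v, G.degree v = 1 ∨ IsSupport G v) {μ : Γ}
    (hμ : ∀ v, ((G.degree v : ℤ) - 2) • μ ≠ 0) : IsVertexMagic Γ G := by
  classical
  choose f hf hsum using
    fun v => exists_forall_ne_zero_sum_neighborFinset_eq hΓ (hps v) (hμ v)
  have hnbr (x : V) : ∃ y, G.Adj x y := by
    rcases hps x with hx | ⟨y, hxy, -⟩
    · exact (SimpleGraph.degree_eq_one_iff_existsUnique_adj.1 hx).exists
    · exact ⟨y, hxy⟩
  choose nbr hadj using hnbr
  refine ⟨fun x => if IsSupport G x then μ else f (nbr x) x, μ, fun x => ?_, fun v => ?_⟩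
  · dsimp only
    split_ifs
    · rintro rfl
      exact hμ x (smul_zero _)
    · exact hf _ _
  · refine (Finset.sum_congr rfl fun x hx => ?_).trans (hsum v)
    refine ite_congr rfl (fun _ => rfl) fun hxs => ?_
    have hxv := ((G.mem_neighborFinset v x).1 hx).symm
    rw [eq_of_degree_eq_one_of_adj_of_adj ((hps x).resolve_right hxs) (hadj x) hxv]

theorem stmt_17_general [Finite V] (hΓ : AddMonoid.exponent Γ = 0) (hG : G.Preconnected)
    (hps : ∀ v, G.degree v = 1 ∨ IsSupport G v) {a b : V} (hab : G.Adj a b)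
    (ha : IsSupport G a) (hb : IsSupport G b) :
    IsVertexMagic Γ G ↔ ∀ y, G.degree y ≠ 2 := by
  constructor
  · intro hmagic y
    obtain ⟨q, hyq, hq⟩ := exists_adj_isSupport hG hps hab ha hb y
    exact hmagic.degree_ne_two_of_adj_isSupport hyq hq
  · intro hdeg
    obtain ⟨μ, hμ⟩ := exists_forall_zsmul_ne_zero_of_exponent_eq_zero hΓ
      (n := fun v => (G.degree v : ℤ) - 2) fun v => sub_ne_zero.2 (mod_cast hdeg v)
    exact isVertexMagic_of_forall_degree_sub_two_zsmul_ne_zero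
      (three_le_enatCard_of_exponent_eq_zero hΓ) hps hμ

end VertexMagic

/-- Let `Γ` be an infinite abelian group which is not a torsion group and
`T` a finite tree of diameter 5 with adjacent central vertices `vc₁`, `vc₂`, both of
which are support vertices. Then `T` is `Γ`-vertex magic iff `T` has no vertex of
degree 2. -/
theorem stmt_17 {V Γ : Type*} [Fintype V] [DecidableEq V]
    [AddCommGroup Γ] [Infinite Γ]
    (hnt : ∃ g : Γ, ¬ IsOfFinAddOrder g)
    (T : SimpleGraph V) [DecidableRel T.Adj] (hT : T.IsTree)
    (hdiam : (∀ a b : V, T.dist a b ≤ 5) ∧ ∃ a b : V, T.dist a b = 5)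
    (vc₁ vc₂ : V) (hadj : T.Adj vc₁ vc₂)
    (hc₁ : ∀ u : V, T.dist vc₁ u ≤ 3) (hc₂ : ∀ u : V, T.dist vc₂ u ≤ 3)
    (hs₁ : ∃ u : V, T.Adj vc₁ u ∧ T.degree u = 1)
    (hs₂ : ∃ u : V, T.Adj vc₂ u ∧ T.degree u = 1) :
    (∃ (ℓ : V → Γ) (μ : Γ), (∀ w, ℓ w ≠ 0) ∧
        ∀ w, ∑ x ∈ T.neighborFinset w, ℓ x = μ) ↔
      (∀ y : V, T.degree y ≠ 2) := by
  obtain ⟨g, hg⟩ := hnt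
  exact stmt_17_general (AddMonoid.exponent_eq_zero_addOrder_zero (addOrderOf_eq_zero hg))
    hT.connected.preconnected
    (degree_eq_one_or_isSupport_of_dist_le_three hT hadj hc₁ hc₂ hs₁ hs₂) hadj hs₁ hs₂
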